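/- Let n ≥ 1 be an integer and let 1 < p < ∞. Then 2^{2n−1}·n! < C(n,p) < 2^{2n}·n!. -/

import Mathlib

open Set Polynomial Nat MeasureTheory ENNReal

/-- `fd 0` belongs to `𝒟ⁿ([a,b])`, with `fd k` its `k`-th derivative: `fd k` exists and is
continuous on `[a,b]` for `0 ≤ k ≤ n-1`, and `fd n` is the derivative of `fd (n-1)` on `(a,b)`. -/
def IsDn (n : ℕ) (a b : ℝ) (fd : ℕ → ℝ → ℝ) : Prop :=
  (∀ k, k + 1 < n → ∀ x ∈ Set.Icc a b, HasDerivWithinAt (fd k) (fd (k + 1) x) (Set.Icc a b) x) ∧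
  ContinuousOn (fd (n - 1)) (Set.Icc a b) ∧
  (∀ x ∈ Set.Ioo a b, HasDerivAt (fd (n - 1)) (fd n x) x)

/-- `m_n(f) = inf_{a<t<b} |f^{(n)}(t)|`. -/
noncomputable def mIoo (n : ℕ) (a b : ℝ) (fd : ℕ → ℝ → ℝ) : ℝ :=
  sInf ((fun t => |fd n t|) '' Set.Ioo a b)

/-- `‖f‖_{p,[a,b]}` for `0 < p < ∞`. -/
noncomputable def Lp (p a b : ℝ) (f : ℝ → ℝ) : ℝ :=
  (∫ t in a..b, |f t| ^ p) ^ (1 / p)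

/-- `‖f‖_{∞,[a,b]}`. -/
noncomputable def Lsup (a b : ℝ) (f : ℝ → ℝ) : ℝ :=
  sSup ((fun t => |f t|) '' Set.Icc a b)

/-- `‖f‖_{p,[a,b]}` for `0 < p ≤ ∞`. -/
noncomputable def pnorm (p : ℝ≥0∞) (a b : ℝ) (f : ℝ → ℝ) : ℝ :=
  if p = ⊤ then Lsup a b f else Lp p.toReal a b f

/-- `D**(n,p,[a,b])`, `p` finite. -/
noncomputable def Dstar (n : ℕ) (p a b : ℝ) : ℝ :=
  sInf { c | ∃ Q : Polynomial ℝ, Q.Monic ∧ Q.natDegree = n ∧ c = Lp p a b (fun x => Q.eval x) }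

/-- `D**(n,∞,[a,b])`. -/
noncomputable def DstarInf (n : ℕ) (a b : ℝ) : ℝ :=
  sInf { c | ∃ Q : Polynomial ℝ, Q.Monic ∧ Q.natDegree = n ∧ c = Lsup a b (fun x => Q.eval x) }

/-- `C(n,p)`, `p` finite. -/
noncomputable def Cnp (n : ℕ) (p : ℝ) : ℝ :=
  sSup { c | ∃ fd : ℕ → ℝ → ℝ, IsDn n 0 1 fd ∧ (∃ x ∈ Set.Icc (0:ℝ) 1, fd 0 x ≠ 0) ∧
    c = mIoo n 0 1 fd / Lp p 0 1 (fd 0) }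

/-- `C(n,∞)`. -/
noncomputable def CnpInf (n : ℕ) : ℝ :=
  sSup { c | ∃ fd : ℕ → ℝ → ℝ, IsDn n 0 1 fd ∧ (∃ x ∈ Set.Icc (0:ℝ) 1, fd 0 x ≠ 0) ∧
    c = mIoo n 0 1 fd / Lsup 0 1 (fd 0) }


/-! Let `σ` be the sign of the Chebyshev polynomial `U_n` carried over to `[0, 1]`. Substituting
`x = cos θ` turns `U_n` into `sin ((n + 1) θ) / sin θ`, so `∫ σ P = 0` for every polynomial `P` of
degree less than `n`, while the integral of `σ` against the shifted `U_n` is `1`. Subtracting from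
`f` its interpolant at the zeros of the shifted `U_n` leaves `f⁽ⁿ⁾(ξ) / n!` times the monic multiple
of it, whence `m_n(f) ≤ 4ⁿ n! ∫ σ f` if `f⁽ⁿ⁾` is positive.

Hölder's inequality turns this into `m_n(f) ≤ 4ⁿ n! ‖f‖_p`, and for `p > 1` the constant is not
sharp. On an initial interval `[0, b]` where `σ` is constant, add to `σ` the multiple `ε τ` of its
copy `τ` scaled to `[0, b]`. The lower bound for the pairing with `f` gains the factor
`1 + b ^ (n + 1) ε`, but since `τ` has mean zero, the norm in the dual space `L^q` increases by
`O(ε²)` only.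

For the lower bound, the Chebyshev polynomial `T_n` carried over to `[0, 1]` has constant `n`-th
derivative `2 ^ (2 n - 1) n!`, is bounded by `1`, and vanishes somewhere, so its `L^p` norm is
less than `1`. -/

section Rolle

variable {n : ℕ} {a b : ℝ} {fd : ℕ → ℝ → ℝ}

lemma IsDn.continuousOn_zero (hn : 1 ≤ n) (h : IsDn n a b fd) : ContinuousOn (fd 0) (Icc a b) := by
  obtain rfl | hn := hn.eq_or_lt
  · exact h.2.1
  · exact fun x hx => (h.1 0 hn x hx).continuousWithinAt

lemma IsDn.succ (hn : 1 ≤ n) (h : IsDn (n + 1) a b fd) : IsDn n a b (fun k => fd (k + 1)) := by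
  obtain ⟨n, rfl⟩ := Nat.exists_eq_add_of_le' hn
  exact ⟨fun k hk => h.1 (k + 1) (by omega), h.2.1, h.2.2⟩

lemma IsDn.hasDerivAt {k : ℕ} (hk : k < n) (h : IsDn n a b fd) {x : ℝ} (hx : x ∈ Ioo a b) :
    HasDerivAt (fd k) (fd (k + 1) x) x := by
  obtain hk | rfl : k + 1 < n ∨ n = k + 1 := by omega
  · exact (h.1 k hk x (Ioo_subset_Icc_self hx)).hasDerivAt (Icc_mem_nhds hx.1 hx.2)
  · exact h.2.2 x hx

lemma IsDn.const_mul (h : IsDn n a b fd) (c : ℝ) : IsDn n a b (fun k x => c * fd k x) :=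
  ⟨fun k hk x hx => (h.1 k hk x hx).const_mul c, h.2.1.const_mul c,
    fun x hx => (h.2.2 x hx).const_mul c⟩

lemma IsDn.sub {gd : ℕ → ℝ → ℝ} (hf : IsDn n a b fd) (hg : IsDn n a b gd) :
    IsDn n a b (fun k x => fd k x - gd k x) :=
  ⟨fun k hk x hx => (hf.1 k hk x hx).sub (hg.1 k hk x hx), hf.2.1.sub hg.2.1,
    fun x hx => (hf.2.2 x hx).sub (hg.2.2 x hx)⟩

lemma IsDn.mono {a' b' : ℝ} (h : IsDn n a b fd) (ha : a ≤ a') (hb : b' ≤ b) :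
    IsDn n a' b' fd :=
  ⟨fun k hk x hx => (h.1 k hk x (Icc_subset_Icc ha hb hx)).mono (Icc_subset_Icc ha hb),
    h.2.1.mono (Icc_subset_Icc ha hb), fun x hx => h.2.2 x (Ioo_subset_Ioo ha hb hx)⟩

lemma IsDn.comp_affine (hn : 1 ≤ n) {α : ℝ} (hα : 0 < α) (β : ℝ)
    (h : IsDn n (α * a + β) (α * b + β) fd) :
    IsDn n a b (fun k x => α ^ k * fd k (α * x + β)) := by
  have hmaps : MapsTo (fun x => α * x + β) (Icc a b) (Icc (α * a + β) (α * b + β)) := by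
    rintro x ⟨hax, hxb⟩
    simp only [mem_Icc]
    constructor <;> gcongr
  have haff (x : ℝ) : HasDerivAt (fun x => α * x + β) α x := by
    simpa using ((hasDerivAt_id x).const_mul α).add_const β
  refine ⟨fun k hk x hx => ?_, ?_, fun x hx => ?_⟩
  · exact (((h.1 k hk _ (hmaps hx)).comp x (haff x).hasDerivWithinAt hmaps).const_mul
      (α ^ k)).congr_deriv (by ring)
  · exact (h.2.1.comp (by fun_prop) hmaps).const_mul _
  · have hx' : α * x + β ∈ Ioo (α * a + β) (α * b + β) := by
      obtain ⟨hax, hxb⟩ := hx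
      constructor <;> gcongr
    refine (((h.2.2 _ hx').comp x (haff x)).const_mul (α ^ (n - 1))).congr_deriv ?_
    change α ^ (n - 1) * (fd n (α * x + β) * α) = α ^ n * fd n (α * x + β)
    rw [mul_left_comm, pow_sub_one_mul (by omega), mul_comm]

lemma isDn_polynomial (hn : 1 ≤ n) (P : ℝ[X]) (a b : ℝ) :
    IsDn n a b (fun k x => (derivative^[k] P).eval x) := by
  have hderiv (k : ℕ) (x : ℝ) : HasDerivAt (fun x => (derivative^[k] P).eval x)
      ((derivative^[k + 1] P).eval x) x := by
    rw [Function.iterate_succ_apply']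
    exact (derivative^[k] P).hasDerivAt x
  refine ⟨fun k _ x _ => (hderiv k x).hasDerivWithinAt, Polynomial.continuousOn _, fun x _ => ?_⟩
  simpa only [Nat.sub_add_cancel hn] using hderiv (n - 1) x

lemma eval_iterate_derivative_of_natDegree_le {R : Type*} [CommSemiring R] {P : R[X]} {n : ℕ}
    (hP : P.natDegree ≤ n) (x : R) : (derivative^[n] P).eval x = n ! * P.coeff n := by
  have hdeg : (derivative^[n] P).natDegree ≤ 0 := by
    simpa [hP] using natDegree_iterate_derivative P n
  rw [eq_C_of_natDegree_le_zero hdeg, eval_C, coeff_iterate_derivative]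
  simp [Nat.descFactorial_self]

lemma IsDn.exists_strictMono_deriv_eq_zero (hn : 1 ≤ n) (h : IsDn n a b fd) {N : ℕ}
    {z : Fin (N + 1) → ℝ} (hz : StrictMono z) (hmem : ∀ i, z i ∈ Icc a b)
    (hzero : ∀ i, fd 0 (z i) = 0) :
    ∃ w : Fin N → ℝ, StrictMono w ∧ (∀ i, w i ∈ Ioo a b) ∧ ∀ i, fd 1 (w i) = 0 := by
  have hsub (i : Fin N) : Ioo (z i.castSucc) (z i.succ) ⊆ Ioo a b :=
    Ioo_subset_Ioo (hmem _).1 (hmem _).2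
  have hrolle (i : Fin N) : ∃ ξ ∈ Ioo (z i.castSucc) (z i.succ), fd 1 ξ = 0 :=
    exists_hasDerivAt_eq_zero (hz i.castSucc_lt_succ)
      ((h.continuousOn_zero hn).mono (Icc_subset_Icc (hmem _).1 (hmem _).2))
      (by rw [hzero, hzero]) fun x hx => h.hasDerivAt hn (hsub i hx)
  choose w hw hw0 using hrolle
  refine ⟨w, fun i j hij => ?_, fun i => hsub i (hw i), hw0⟩
  calc w i < z i.succ := (hw i).2
    _ ≤ z j.castSucc := hz.monotone (Fin.succ_le_castSucc_iff.2 hij)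
    _ < w j := (hw j).1

lemma IsDn.exists_eq_zero_of_strictMono (hn : 1 ≤ n) (h : IsDn n a b fd) {z : Fin (n + 1) → ℝ}
    (hz : StrictMono z) (hmem : ∀ i, z i ∈ Icc a b) (hzero : ∀ i, fd 0 (z i) = 0) :
    ∃ ξ ∈ Ioo a b, fd n ξ = 0 := by
  obtain ⟨w, hw, hwmem, hw0⟩ := h.exists_strictMono_deriv_eq_zero hn hz hmem hzero
  induction n, hn using Nat.le_induction generalizing fd with
  | base => exact ⟨w 0, hwmem 0, hw0 0⟩
  | succ n hn ih =>
    have hwmem' (i) : w i ∈ Icc a b := Ioo_subset_Icc_self (hwmem i)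
    obtain ⟨v, hv, hvmem, hv0⟩ := (h.succ hn).exists_strictMono_deriv_eq_zero hn hw hwmem' hw0
    exact ih (h.succ hn) hw hwmem' hw0 v hv hvmem hv0

lemma IsDn.exists_eq_zero_of_finset (hn : 1 ≤ n) (h : IsDn n a b fd) {s : Finset ℝ}
    (hs : ↑s ⊆ Icc a b) (hcard : s.card = n + 1) (hzero : ∀ x ∈ s, fd 0 x = 0) :
    ∃ ξ ∈ Ioo a b, fd n ξ = 0 :=
  h.exists_eq_zero_of_strictMono hn (s.orderEmbOfFin hcard).strictMono
    (fun i => hs (s.orderEmbOfFin_mem hcard i)) (fun i => hzero _ (s.orderEmbOfFin_mem hcard i))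

lemma IsDn.exists_eq_factorial_mul_coeff (hn : 1 ≤ n) (h : IsDn n a b fd) {Q : ℝ[X]}
    (hQ : Q.natDegree ≤ n) {s : Finset ℝ} (hs : ↑s ⊆ Icc a b) (hcard : s.card = n + 1)
    (heq : ∀ x ∈ s, fd 0 x = Q.eval x) : ∃ ξ ∈ Ioo a b, fd n ξ = n ! * Q.coeff n := by
  obtain ⟨ξ, hξ, hξ0⟩ := (h.sub (isDn_polynomial hn Q a b)).exists_eq_zero_of_finset hn hs hcard
    fun x hx => sub_eq_zero.2 (heq x hx)
  rw [eval_iterate_derivative_of_natDegree_le hQ, sub_eq_zero] at hξ0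
  exact ⟨ξ, hξ, hξ0⟩

theorem IsDn.exists_sub_interpolate_eq (hn : 1 ≤ n) (hab : a < b) (h : IsDn n a b fd)
    {s : Finset ℝ} (hs : ↑s ⊆ Icc a b) (hcard : s.card = n) {x : ℝ} (hx : x ∈ Icc a b) :
    ∃ ξ ∈ Ioo a b, fd 0 x - (Lagrange.interpolate s id (fd 0)).eval x =
      fd n ξ / n ! * (Lagrange.nodal s id).eval x := by
  set P := Lagrange.interpolate s id (fd 0)
  set w := Lagrange.nodal s id
  have hPs {y : ℝ} (hy : y ∈ s) : P.eval y = fd 0 y :=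
    Lagrange.eval_interpolate_at_node _ (injOn_id _) hy
  have hws {y : ℝ} (hy : y ∈ s) : w.eval y = 0 := Lagrange.eval_nodal_at_node (v := id) hy
  by_cases hxs : x ∈ s
  · obtain ⟨ξ, hξ⟩ := nonempty_Ioo.2 hab
    exact ⟨ξ, hξ, by rw [hPs hxs, hws hxs]; ring⟩
  have hwx : w.eval x ≠ 0 :=
    Lagrange.eval_nodal_not_at_node fun y hy => (ne_of_mem_of_not_mem hy hxs).symm
  set c := (fd 0 x - P.eval x) / w.eval x with hc
  have hPdeg : P.degree < n := hcard ▸ Lagrange.degree_interpolate_lt _ (injOn_id _)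
  have hwdeg : w.natDegree = n := hcard ▸ Lagrange.natDegree_nodal
  have hwlead : w.coeff n = 1 := hwdeg ▸ Lagrange.nodal_monic
  have hdeg : (P + C c * w).natDegree ≤ n := natDegree_add_le_of_degree_le
    (natDegree_le_of_degree_le hPdeg.le) (hwdeg ▸ natDegree_C_mul_le c w)
  have hcoeff : (P + C c * w).coeff n = c := by
    simp [hwlead, coeff_eq_zero_of_degree_lt hPdeg]
  have heq : ∀ y ∈ insert x s, fd 0 y = (P + C c * w).eval y := by
    refine (Finset.forall_mem_insert _ _ _).2 ⟨?_, fun y hy => ?_⟩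
    · simp [hc, hwx]
    · simp [hPs hy, hws hy]
  obtain ⟨ξ, hξ, hξc⟩ := h.exists_eq_factorial_mul_coeff hn hdeg
    (by simpa [insert_subset_iff] using ⟨hx, hs⟩) (by rw [Finset.card_insert_of_notMem hxs, hcard])
    heq
  refine ⟨ξ, hξ, ?_⟩
  rw [hξc, hcoeff, mul_div_cancel_left₀ c (by positivity), hc, div_mul_cancel₀ _ hwx]

end Rolle

lemma intervalIntegrable_bdd_mul {f g : ℝ → ℝ} {a b c : ℝ} (hf : IntervalIntegrable f volume a b)
    (hg : Measurable g) (hgc : ∀ x, |g x| ≤ c) :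
    IntervalIntegrable (fun x => g x * f x) volume a b :=
  intervalIntegrable_iff.2 <|
    hf.def'.bdd_mul (c := c) hg.aestronglyMeasurable (Filter.Eventually.of_forall hgc)

lemma intervalIntegrable_of_measurable_of_abs_le {g : ℝ → ℝ} {a b c : ℝ} (hg : Measurable g)
    (hgc : ∀ x, |g x| ≤ c) : IntervalIntegrable g volume a b := by
  simpa only [mul_one] using intervalIntegrable_bdd_mul (intervalIntegrable_const (c := 1)) hg hgc

section Chebyshev

open Real (sin cos)
open scoped Real

variable {n : ℕ}

lemma abs_sign_le_one (x : ℝ) : |(SignType.sign x : ℝ)| ≤ 1 := by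
  cases SignType.sign x <;> simp

lemma measurable_sign : Measurable fun x : ℝ => (SignType.sign x : ℝ) := by
  have hcast : Monotone ((↑) : SignType → ℝ) := by
    rintro (_ | _ | _) (_ | _ | _) h <;> first | exact absurd h (by decide) | simp
  exact (hcast.comp SignType.sign.monotone).measurable

/-- The sign of the Chebyshev polynomial `U_n`. Integration against it over `[-1, 1]` annihilates
the polynomials of degree less than `n`, which is what makes it bound `m_n(f)`. -/
noncomputable def signU (n : ℕ) (x : ℝ) : ℝ :=
  SignType.sign ((Chebyshev.U ℝ n).eval x)

lemma abs_signU_le_one (n : ℕ) (x : ℝ) : |signU n x| ≤ 1 := abs_sign_le_one _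

lemma measurable_signU (n : ℕ) : Measurable (signU n) :=
  measurable_sign.comp (Polynomial.continuous _).measurable

lemma signU_mul_eval (n : ℕ) (x : ℝ) :
    signU n x * (Chebyshev.U ℝ n).eval x = |(Chebyshev.U ℝ n).eval x| :=
  sign_mul_self _

lemma intervalIntegrable_signU_mul {f : ℝ → ℝ} {a b : ℝ} (hf : ContinuousOn f (uIcc a b)) :
    IntervalIntegrable (fun x => signU n x * f x) volume a b :=
  intervalIntegrable_bdd_mul hf.intervalIntegrable (measurable_signU n) (abs_signU_le_one n)

lemma integral_comp_cos_mul_sin (f : ℝ → ℝ) :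
    ∫ θ in 0..π, f (cos θ) * sin θ = ∫ x in -1..1, f x := by
  have h := intervalIntegral.integral_comp_mul_deriv_of_deriv_nonpos (g := f) (a := 0) (b := π)
    Real.continuous_cos.continuousOn (fun θ _ => Real.hasDerivAt_cos θ)
    (fun θ hθ => by
      simp only [Real.pi_pos.le, inf_of_le_left, sup_of_le_right] at hθ
      exact neg_nonpos.2 (Real.sin_nonneg_of_mem_Icc (Ioo_subset_Icc_self hθ)))
  simp only [Real.cos_zero, Real.cos_pi, Function.comp_apply, mul_neg,
    intervalIntegral.integral_neg] at h
  rw [intervalIntegral.integral_symm 1, ← h, neg_neg]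

lemma signU_cos {θ : ℝ} (hθ : θ ∈ Ioo 0 π) :
    signU n (cos θ) = SignType.sign (sin ((n + 1) * θ)) := by
  have h := Chebyshev.U_real_cos θ n
  push_cast at h
  rw [signU, ← h, sign_mul, sign_pos (Real.sin_pos_of_mem_Ioo hθ), mul_one]

lemma integral_signU_mul (n : ℕ) (f : ℝ → ℝ) :
    ∫ x in -1..1, signU n x * f x =
      ∫ θ in 0..π, SignType.sign (sin ((n + 1) * θ)) * (f (cos θ) * sin θ) := by
  rw [← integral_comp_cos_mul_sin]
  refine intervalIntegral.integral_congr_Ioo_of_le Real.pi_pos.le fun θ hθ => ?_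
  simp only [signU_cos hθ, mul_assoc]

lemma integral_mul_sin_add_of_antiperiodic {F : ℝ → ℝ} {N : ℕ} (hN : N ≠ 0)
    (hF : Function.Antiperiodic F (π / N)) (j : ℕ) (β : ℝ) :
    ∫ θ in -π..π, F θ * sin (j * θ + (β + j * (π / N))) =
      -∫ θ in -π..π, F θ * sin (j * θ + β) := by
  have hF' : Function.Periodic F (2 * π) := by
    have h := hF.periodic_two_mul.nat_mul N
    rwa [mul_left_comm, mul_div_cancel₀ _ (Nat.cast_ne_zero.2 hN)] at h
  have hsin : Function.Periodic (fun θ => sin (j * θ + β)) (2 * π) := fun θ => by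
    simp only [mul_add, add_right_comm, Real.sin_add_nat_mul_two_pi]
  have h := (hF'.mul hsin).intervalIntegral_add_eq (-π + π / N) (-π)
  rw [show -π + π / N + 2 * π = π + π / N by ring, show -π + 2 * π = π by ring,
    ← intervalIntegral.integral_comp_add_right] at h
  simp only [Pi.mul_apply] at h
  rw [← h, ← intervalIntegral.integral_neg]
  refine intervalIntegral.integral_congr fun θ _ => ?_
  simp only [hF θ]
  ring_nf

lemma integral_mul_sin_eq_zero_of_antiperiodic {F : ℝ → ℝ} {N : ℕ}
    (hF : Function.Antiperiodic F (π / N)) (hFi : IntervalIntegrable F volume (-π) π) {j : ℕ}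
    (hj : j < N) (β : ℝ) : ∫ θ in -π..π, F θ * sin (j * θ + β) = 0 := by
  have hN : N ≠ 0 := (j.zero_le.trans_lt hj).ne'
  set δ := π / N with hδ
  have hint (γ : ℝ) : IntervalIntegrable (fun θ => F θ * sin (j * θ + γ)) volume (-π) π :=
    hFi.mul_continuousOn (by fun_prop)
  have hcos : 0 < cos (j * δ / 2) := by
    have hN' : (0 : ℝ) < N := by positivity
    have hjN : j * δ < π := by
      rw [hδ, mul_div_assoc', div_lt_iff₀ hN', mul_comm]
      gcongr
    have hj0 : 0 ≤ j * δ := by positivity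
    exact Real.cos_pos_of_mem_Ioo ⟨by linarith, by linarith⟩
  -- The phases `β ∓ j δ / 2` give opposite integrals, but the integrands sum to
  -- `2 cos (j δ / 2)` times the one with phase `β`.
  have hsum : ∫ θ in -π..π, (F θ * sin (j * θ + (β - j * δ / 2)) +
      F θ * sin (j * θ + (β - j * δ / 2 + j * δ))) =
      2 * cos (j * δ / 2) * ∫ θ in -π..π, F θ * sin (j * θ + β) := by
    rw [← intervalIntegral.integral_const_mul]
    refine intervalIntegral.integral_congr fun θ _ => ?_
    rw [show j * θ + (β - j * δ / 2) = (j * θ + β) - j * δ / 2 by ring,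
      show j * θ + (β - j * δ / 2 + j * δ) = (j * θ + β) + j * δ / 2 by ring, Real.sin_add,
      Real.sin_sub]
    ring
  rw [intervalIntegral.integral_add (hint _) (hint _),
    integral_mul_sin_add_of_antiperiodic hN hF, add_neg_cancel] at hsum
  exact (mul_eq_zero.1 hsum.symm).resolve_left (by positivity)

lemma integral_sign_sin_mul_sin {N j : ℕ} (hj : j < N) :
    ∫ θ in 0..π, SignType.sign (sin (N * θ)) * sin (j * θ) = 0 := by
  set G : ℝ → ℝ := fun θ => SignType.sign (sin (N * θ)) * sin (j * θ) with hG
  have hN : (N : ℝ) ≠ 0 := by exact_mod_cast (j.zero_le.trans_lt hj).ne'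
  have hF : Function.Antiperiodic (fun θ => (SignType.sign (sin (N * θ)) : ℝ)) (π / N) :=
    fun θ => by
      simp only [mul_add, mul_div_cancel₀ _ hN, Real.sin_add_pi, Left.sign_neg, SignType.coe_neg]
  have hFi (a b : ℝ) : IntervalIntegrable (fun θ => (SignType.sign (sin (N * θ)) : ℝ))
      volume a b :=
    intervalIntegrable_of_measurable_of_abs_le (measurable_sign.comp (by fun_prop))
      fun θ => abs_sign_le_one (sin (N * θ))
  have hGi (a b : ℝ) : IntervalIntegrable G volume a b :=
    (hFi a b).mul_continuousOn (by fun_prop)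
  have heven : ∫ θ in -π..0, G θ = ∫ θ in 0..π, G θ := by
    have h := intervalIntegral.integral_comp_neg (a := 0) (b := π) G
    simpa [hG, Left.sign_neg] using h.symm
  have h := integral_mul_sin_eq_zero_of_antiperiodic hF (hFi _ _) hj 0
  simp only [add_zero] at h
  rw [← intervalIntegral.integral_add_adjacent_intervals (hGi _ 0) (hGi 0 _), heven] at h
  linarith

lemma integral_abs_sin_nat_mul {N : ℕ} (hN : N ≠ 0) : ∫ θ in 0..π, |sin (N * θ)| = 2 := by
  have hN' : (N : ℝ) ≠ 0 := Nat.cast_ne_zero.2 hN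
  have hperiod : Function.Periodic (fun θ => |sin θ|) π := fun θ => by simp
  have hbase : ∫ θ in 0..π, |sin θ| = 2 := by
    rw [intervalIntegral.integral_congr_Ioo_of_le Real.pi_pos.le fun θ hθ =>
      abs_of_pos (Real.sin_pos_of_mem_Ioo hθ), integral_sin]
    norm_num
  have h := hperiod.intervalIntegral_add_zsmul_eq N 0
    fun _ _ => (by fun_prop : Continuous fun θ => |sin θ|).intervalIntegrable _ _
  simp only [zero_add, hbase, zsmul_eq_mul, Int.cast_natCast] at h
  rw [intervalIntegral.integral_comp_mul_left (fun θ => |sin θ|) hN', mul_zero, h, smul_eq_mul,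
    inv_mul_cancel_left₀ hN']

lemma integral_signU_mul_eval_U {k : ℕ} (hk : k < n) :
    ∫ x in -1..1, signU n x * (Chebyshev.U ℝ k).eval x = 0 := by
  rw [integral_signU_mul]
  simp only [Chebyshev.U_real_cos]
  exact_mod_cast integral_sign_sin_mul_sin (Nat.succ_lt_succ hk)

lemma integral_signU_mul_eval_U_self (n : ℕ) :
    ∫ x in -1..1, signU n x * (Chebyshev.U ℝ n).eval x = 2 := by
  rw [integral_signU_mul]
  simp only [Chebyshev.U_real_cos]
  rw [← integral_abs_sin_nat_mul n.succ_ne_zero]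
  push_cast
  simp only [sign_mul_self]

/-- The Chebyshev polynomials `U_k` as a sequence with `U_k` of degree `k`, used to expand the
polynomials of degree less than `n` in `U_0, …, U_{n-1}`. -/
noncomputable def sequenceU : Polynomial.Sequence ℝ where
  elems' k := Chebyshev.U ℝ k
  degree_eq' k := by simp

lemma integral_signU_mul_eval_of_degree_lt {Q : ℝ[X]} (hQ : Q.degree < n) :
    ∫ x in -1..1, signU n x * Q.eval x = 0 := by
  have hunit (i : ℕ) (_ : i < n) : IsUnit (sequenceU i).leadingCoeff := by
    simp [sequenceU]
  rw [← mem_degreeLT, ← Sequence.span_degreeLT sequenceU hunit,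
    show Set.Iio n = Finset.range n by simp, Submodule.mem_span_image_finset_iff_exists_fun'] at hQ
  obtain ⟨c, rfl⟩ := hQ
  have hexpand (x : ℝ) : signU n x * (∑ i ∈ Finset.range n, c i • sequenceU i).eval x =
      ∑ i ∈ Finset.range n, c i * (signU n x * (Chebyshev.U ℝ i).eval x) := by
    simp only [eval_finsetSum, eval_smul, smul_eq_mul, Finset.mul_sum, mul_left_comm]
    rfl
  simp only [hexpand]
  rw [intervalIntegral.integral_finsetSum fun i _ =>
    (intervalIntegrable_signU_mul (Polynomial.continuous _).continuousOn).const_mul _]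
  refine Finset.sum_eq_zero fun i hi => ?_
  rw [intervalIntegral.integral_const_mul, integral_signU_mul_eval_U (Finset.mem_range.1 hi),
    mul_zero]

lemma exists_eval_U_eq_mul_nodal (n : ℕ) : ∃ s : Finset ℝ, ↑s ⊆ Icc (-1 : ℝ) 1 ∧ s.card = n ∧
    ∀ x, (Chebyshev.U ℝ n).eval x = 2 ^ n * (Lagrange.nodal s id).eval x := by
  set s := (Finset.range n).image fun k : ℕ => cos ((k + 1) * π / (n + 1))
  have hroots : (Chebyshev.U ℝ n).roots = s.val := Chebyshev.roots_U_real n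
  have hcard : s.card = n := by
    rw [Finset.card_image_of_injOn
      ((Finset.range n).nodup_map_iff_injOn.1 (Chebyshev.roots_U_real_nodup n)), Finset.card_range]
  refine ⟨s, ?_, hcard, fun x => ?_⟩
  · simp only [s, Finset.coe_image, image_subset_iff]
    exact fun k _ => Real.cos_mem_Icc _
  · have h := C_leadingCoeff_mul_prod_multiset_X_sub_C (p := Chebyshev.U ℝ n) (by
      rw [hroots, Finset.card_val, hcard]; simp)
    rw [← h, hroots, Chebyshev.leadingCoeff_U_natCast, eval_mul, eval_C]
    rfl

lemma IsDn.le_integral_signU_mul {fd : ℕ → ℝ → ℝ} {m : ℝ} (hn : 1 ≤ n) (h : IsDn n (-1) 1 fd)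
    (hm : ∀ t ∈ Ioo (-1 : ℝ) 1, m ≤ fd n t) :
    m / (2 ^ n * n !) * 2 ≤ ∫ x in -1..1, signU n x * fd 0 x := by
  obtain ⟨s, hs, hcard, hU⟩ := exists_eval_U_eq_mul_nodal n
  set P := Lagrange.interpolate s id (fd 0)
  have hP : P.degree < n := hcard ▸ Lagrange.degree_interpolate_lt _ (injOn_id _)
  have hcont : ContinuousOn (fd 0) (uIcc (-1) 1) := by
    simpa only [uIcc_of_le (neg_one_lt_zero.trans one_pos).le] using h.continuousOn_zero hn
  have hpoint : ∀ x ∈ Icc (-1 : ℝ) 1, m / (2 ^ n * n !) * (signU n x * (Chebyshev.U ℝ n).eval x) ≤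
      signU n x * (fd 0 x - P.eval x) := by
    intro x hx
    obtain ⟨ξ, hξ, hfx⟩ := h.exists_sub_interpolate_eq hn (by norm_num) hs hcard hx
    calc _ ≤ fd n ξ / (2 ^ n * n !) * (signU n x * (Chebyshev.U ℝ n).eval x) := by
          rw [signU_mul_eval]
          gcongr
          exact hm ξ hξ
      _ = signU n x * (fd 0 x - P.eval x) := by
          rw [hfx, hU]
          field_simp
  calc m / (2 ^ n * n !) * 2
      = ∫ x in -1..1, m / (2 ^ n * n !) * (signU n x * (Chebyshev.U ℝ n).eval x) := by
        rw [intervalIntegral.integral_const_mul, integral_signU_mul_eval_U_self]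
    _ ≤ ∫ x in -1..1, signU n x * (fd 0 x - P.eval x) :=
        intervalIntegral.integral_mono_on (by norm_num)
          ((intervalIntegrable_signU_mul (Polynomial.continuousOn _)).const_mul _)
          (intervalIntegrable_signU_mul (hcont.sub P.continuousOn)) hpoint
    _ = ∫ x in -1..1, signU n x * fd 0 x := by
        simp only [mul_sub]
        rw [intervalIntegral.integral_sub (intervalIntegrable_signU_mul hcont)
          (intervalIntegrable_signU_mul P.continuousOn), integral_signU_mul_eval_of_degree_lt hP,
          sub_zero]

lemma integral_signU_comp_mul {b : ℝ} (hb : 0 < b) (f : ℝ → ℝ) :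
    ∫ t in 0..b, signU n (2 / b * t - 1) * f t =
      b / 2 * ∫ x in -1..1, signU n x * f (b / 2 * x + b / 2) := by
  have hcancel (x : ℝ) : 2 / b * (b / 2 * x + b / 2) - 1 = x := by field_simp; ring
  have h := intervalIntegral.integral_comp_mul_add (a := -1) (b := 1)
    (fun t => signU n (2 / b * t - 1) * f t) (half_pos hb).ne' (b / 2)
  simp only [hcancel] at h
  rw [h, smul_eq_mul, mul_inv_cancel_left₀ (half_pos hb).ne']
  ring_nf

lemma IsDn.le_integral_signU_comp_mul {fd : ℕ → ℝ → ℝ} {m b : ℝ} (hn : 1 ≤ n) (hb : 0 < b)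
    (h : IsDn n 0 b fd) (hm : ∀ t ∈ Ioo 0 b, m ≤ fd n t) :
    m * b ^ (n + 1) / (2 ^ (2 * n) * n !) ≤ ∫ t in 0..b, signU n (2 / b * t - 1) * fd 0 t := by
  have hb2 : 0 < b / 2 := half_pos hb
  have h' : IsDn n (b / 2 * -1 + b / 2) (b / 2 * 1 + b / 2) fd := by
    convert h using 1 <;> ring
  have hle := (h'.comp_affine hn hb2).le_integral_signU_mul hn (m := (b / 2) ^ n * m)
    fun t ht => by
      gcongr
      refine hm _ ⟨?_, ?_⟩ <;> nlinarith [ht.1, ht.2]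
  simp only [pow_zero, one_mul] at hle
  rw [integral_signU_comp_mul hb]
  calc m * b ^ (n + 1) / (2 ^ (2 * n) * n !)
      = b / 2 * ((b / 2) ^ n * m / (2 ^ n * n !) * 2) := by
        rw [div_pow]
        field_simp
        ring
    _ ≤ _ := by gcongr

lemma integral_signU_comp {b : ℝ} (hn : 1 ≤ n) (hb : 0 < b) :
    ∫ t in 0..b, signU n (2 / b * t - 1) = 0 := by
  have hdeg : (1 : ℝ[X]).degree < n := by
    rw [degree_one]
    exact_mod_cast hn
  have h : ∫ x in -1..1, signU n x = 0 := by
    simpa using integral_signU_mul_eval_of_degree_lt hdeg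
  simpa [h] using integral_signU_comp_mul (n := n) hb 1

end Chebyshev

section Lp

variable {p q a b : ℝ}

lemma Lp_nonneg (hab : a ≤ b) (f : ℝ → ℝ) : 0 ≤ Lp p a b f :=
  Real.rpow_nonneg (intervalIntegral.integral_nonneg hab fun _ _ => by positivity) _

lemma Lp_const_mul_of_abs_eq_one {s : ℝ} (hs : |s| = 1) (f : ℝ → ℝ) :
    Lp p a b (fun t => s * f t) = Lp p a b f := by
  simp only [_root_.Lp, abs_mul, hs, one_mul]

lemma memLp_Ioc_of_continuousOn {f : ℝ → ℝ} (hf : ContinuousOn f (Icc a b)) (r : ℝ≥0∞) :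
    MemLp f r (volume.restrict (Ioc a b)) := by
  obtain ⟨K, hK⟩ := isCompact_Icc.exists_bound_of_continuousOn hf
  exact .of_bound ((hf.mono Ioc_subset_Icc_self).aestronglyMeasurable measurableSet_Ioc) K
    ((ae_restrict_mem measurableSet_Ioc).mono fun x hx => hK x (Ioc_subset_Icc_self hx))

lemma integral_mul_le_Lp_mul_Lp (hpq : q.HolderConjugate p) (hab : a ≤ b) {f g : ℝ → ℝ} {K : ℝ}
    (hg : Measurable g) (hgK : ∀ x, |g x| ≤ K) (hf : ContinuousOn f (Icc a b)) :
    ∫ t in a..b, g t * f t ≤ Lp q a b g * Lp p a b f := by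
  have hgq : MemLp g (ENNReal.ofReal q) (volume.restrict (Ioc a b)) :=
    .of_bound hg.aestronglyMeasurable K (.of_forall hgK)
  have holder := integral_mul_norm_le_Lp_mul_Lq hpq hgq (memLp_Ioc_of_continuousOn hf _)
  simp only [_root_.Lp, intervalIntegral.integral_of_le hab]
  calc ∫ t in Ioc a b, g t * f t ≤ ∫ t in Ioc a b, ‖g t * f t‖ :=
        (Real.le_norm_self _).trans (norm_integral_le_integral_norm _)
    _ = ∫ t in Ioc a b, ‖g t‖ * ‖f t‖ := by simp only [norm_mul]
    _ ≤ _ := holder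

lemma one_add_mul_rpow_le {ε x : ℝ} (hq : 1 ≤ q) (hε : 0 ≤ ε) (hε1 : ε ≤ 1) (hx : |x| ≤ 1) :
    (1 + ε * x) ^ q ≤
      ((1 + ε) ^ q + (1 - ε) ^ q) / 2 + ((1 + ε) ^ q - (1 - ε) ^ q) / 2 * x := by
  obtain ⟨hl, hu⟩ := abs_le.1 hx
  have h := (convexOn_rpow hq).2 (mem_Ici.2 (by linarith : 0 ≤ 1 + ε))
    (mem_Ici.2 (sub_nonneg.2 hε1)) (by linarith : 0 ≤ (1 + x) / 2)
    (by linarith : 0 ≤ (1 - x) / 2) (by ring)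
  simp only [smul_eq_mul] at h
  calc (1 + ε * x) ^ q = ((1 + x) / 2 * (1 + ε) + (1 - x) / 2 * (1 - ε)) ^ q := by ring_nf
    _ ≤ _ := h
    _ = _ := by ring

lemma Lp_le_of_abs_le_one_add_mul {g s : ℝ → ℝ} {ε : ℝ} (hq : 1 ≤ q) (hε : 0 ≤ ε) (hε1 : ε ≤ 1)
    (hs : Measurable s) (hs1 : ∀ t, |s t| ≤ 1) (hs0 : ∫ t in 0..1, s t = 0)
    (hg : ∀ t ∈ Ioc (0 : ℝ) 1, |g t| ≤ 1 + ε * s t) :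
    Lp q 0 1 g ≤ (((1 + ε) ^ q + (1 - ε) ^ q) / 2) ^ (1 / q) := by
  set A := ((1 + ε) ^ q + (1 - ε) ^ q) / 2
  set B := ((1 + ε) ^ q - (1 - ε) ^ q) / 2
  have hsi : IntervalIntegrable s volume 0 1 := intervalIntegrable_of_measurable_of_abs_le hs hs1
  have hlin : IntervalIntegrable (fun t => A + B * s t) volume 0 1 :=
    intervalIntegrable_const.add (hsi.const_mul B)
  have hpoint : ∀ t ∈ Ioc (0 : ℝ) 1, |g t| ^ q ≤ A + B * s t := fun t ht =>
    calc |g t| ^ q ≤ (1 + ε * s t) ^ q := by gcongr; exact hg t ht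
      _ ≤ A + B * s t := one_add_mul_rpow_le hq hε hε1 (hs1 t)
  have hle : ∫ t in 0..1, |g t| ^ q ≤ A :=
    calc ∫ t in 0..1, |g t| ^ q ≤ ∫ t in 0..1, (A + B * s t) := by
          simp only [intervalIntegral.integral_of_le zero_le_one]
          exact integral_mono_of_nonneg (.of_forall fun t => by positivity) hlin.1
            ((ae_restrict_mem measurableSet_Ioc).mono hpoint)
      _ = A := by
          rw [intervalIntegral.integral_add intervalIntegrable_const (hsi.const_mul B),
            intervalIntegral.integral_const_mul, hs0]
          simp
  have hnonneg : 0 ≤ ∫ t in 0..1, |g t| ^ q :=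
    intervalIntegral.integral_nonneg zero_le_one fun t _ => by positivity
  exact Real.rpow_le_rpow hnonneg hle (by positivity)

lemma exists_rpow_add_rpow_lt (hq : 0 < q) {c : ℝ} (hc : 0 < c) :
    ∃ ε ∈ Ioo (0 : ℝ) 1, ((1 + ε) ^ q + (1 - ε) ^ q) / 2 < (1 + c * ε) ^ q := by
  -- Both sides are `1` at `ε = 0`, where they have derivatives `0` and `c * q`.
  have hderiv (d : ℝ) : HasDerivAt (fun ε => (1 + d * ε) ^ q) (d * q) 0 := by
    have h := ((hasDerivAt_id (0 : ℝ)).const_mul d).const_add 1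
    simpa using h.rpow_const (p := q) (by simp)
  have hslope := hasDerivAt_iff_tendsto_slope.1
    ((hderiv c).sub (((hderiv 1).add (hderiv (-1))).div_const 2))
  have hpos : 0 < c * q - (1 * q + -1 * q) / 2 := by
    ring_nf
    positivity
  have hev := (hslope.eventually_const_lt hpos).filter_mono (nhdsGT_le_nhdsNE 0)
  obtain ⟨ε, hε, hmem⟩ := (hev.and (Ioo_mem_nhdsGT one_pos)).exists
  refine ⟨ε, hmem, ?_⟩
  rw [slope_def_field, sub_zero, div_pos_iff_of_pos_right hmem.1] at hε
  simp only [one_mul, neg_mul, ← sub_eq_add_neg, Pi.add_apply, Pi.sub_apply, mul_zero, add_zero,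
    Real.one_rpow, sub_zero, add_self_div_two, sub_self, sub_pos] at hε
  linarith

end Lp

section UpperBound

variable {n : ℕ} {b ε : ℝ}

/-- The sign function `signU n`, carried over to `[0, 1]`, plus `ε` times its copy on `[0, b]`.
Both summands bound `m_n(f)`, and for `p > 1` the perturbation makes the pairing with `f` grow
faster in `ε` than the dual norm. -/
noncomputable def perturbedSign (n : ℕ) (b ε t : ℝ) : ℝ :=
  signU n (2 * t - 1) + ε * {t | t ≤ b}.indicator (fun t => signU n (2 / b * t - 1)) t

lemma measurable_indicator_signU (n : ℕ) (b : ℝ) :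
    Measurable ({t | t ≤ b}.indicator fun t => signU n (2 / b * t - 1)) :=
  ((measurable_signU n).comp (by fun_prop)).indicator measurableSet_Iic

lemma abs_indicator_signU_le_one (n : ℕ) (b t : ℝ) :
    |{t | t ≤ b}.indicator (fun t => signU n (2 / b * t - 1)) t| ≤ 1 := by
  by_cases ht : t ∈ {t | t ≤ b} <;> simp [ht, abs_signU_le_one]

lemma measurable_perturbedSign (n : ℕ) (b ε : ℝ) : Measurable (perturbedSign n b ε) :=
  ((measurable_signU n).comp (by fun_prop)).add ((measurable_indicator_signU n b).const_mul ε)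

lemma abs_perturbedSign_le (hε : 0 ≤ ε) (t : ℝ) : |perturbedSign n b ε t| ≤ 1 + ε := by
  have h := abs_indicator_signU_le_one n b t
  calc _ ≤ _ := abs_add_le _ _
    _ ≤ 1 + ε := by
      rw [abs_mul, abs_of_nonneg hε]
      nlinarith [abs_signU_le_one n (2 * t - 1)]

lemma IsDn.le_integral_perturbedSign_mul {fd : ℕ → ℝ → ℝ} {m : ℝ} (hn : 1 ≤ n) (hb : b ∈ Ioc 0 1)
    (hε : 0 ≤ ε) (h : IsDn n 0 1 fd) (hm : ∀ t ∈ Ioo (0 : ℝ) 1, m ≤ fd n t) :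
    m / (2 ^ (2 * n) * n !) * (1 + b ^ (n + 1) * ε) ≤
      ∫ t in 0..1, perturbedSign n b ε t * fd 0 t := by
  have hcont : ContinuousOn (fd 0) (uIcc 0 1) := by
    simpa only [uIcc_of_le zero_le_one] using h.continuousOn_zero hn
  have hfull := h.le_integral_signU_comp_mul hn one_pos hm
  have hpart := (h.mono le_rfl hb.2).le_integral_signU_comp_mul hn hb.1
    fun t ht => hm t ⟨ht.1, ht.2.trans_le hb.2⟩
  rw [← intervalIntegral.integral_indicator (Ioc_subset_Icc_self hb)] at hpart
  simp only [div_one, one_pow, mul_one] at hfull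
  have hint : IntervalIntegrable (fun t => signU n (2 * t - 1) * fd 0 t) volume 0 1 :=
    intervalIntegrable_bdd_mul hcont.intervalIntegrable ((measurable_signU n).comp (by fun_prop))
      fun t => abs_signU_le_one n _
  have hint' : IntervalIntegrable
      ({t | t ≤ b}.indicator fun t => signU n (2 / b * t - 1) * fd 0 t) volume 0 1 := by
    simpa only [← indicator_mul_left] using intervalIntegrable_bdd_mul hcont.intervalIntegrable
      (measurable_indicator_signU n b) (abs_indicator_signU_le_one n b)
  calc m / (2 ^ (2 * n) * n !) * (1 + b ^ (n + 1) * ε)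
      = m / (2 ^ (2 * n) * n !) + ε * (m * b ^ (n + 1) / (2 ^ (2 * n) * n !)) := by ring
    _ ≤ (∫ t in 0..1, signU n (2 * t - 1) * fd 0 t) + ε *
        ∫ t in 0..1, {t | t ≤ b}.indicator (fun t => signU n (2 / b * t - 1) * fd 0 t) t := by
      gcongr
    _ = ∫ t in 0..1, perturbedSign n b ε t * fd 0 t := by
      rw [← intervalIntegral.integral_const_mul,
        ← intervalIntegral.integral_add hint (hint'.const_mul ε)]
      simp only [perturbedSign, indicator_mul_left, add_mul, mul_assoc]

lemma IsDn.mul_le_Lp_perturbedSign_mul_Lp {fd : ℕ → ℝ → ℝ} {m p q : ℝ}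
    (hpq : q.HolderConjugate p) (hn : 1 ≤ n) (hb : b ∈ Ioc 0 1) (hε : 0 ≤ ε) (h : IsDn n 0 1 fd)
    (hm : ∀ t ∈ Ioo (0 : ℝ) 1, m ≤ fd n t) :
    m / (2 ^ (2 * n) * n !) * (1 + b ^ (n + 1) * ε) ≤
      Lp q 0 1 (perturbedSign n b ε) * Lp p 0 1 (fd 0) :=
  (h.le_integral_perturbedSign_mul hn hb hε hm).trans <|
    integral_mul_le_Lp_mul_Lp hpq zero_le_one (measurable_perturbedSign n b ε)
      (abs_perturbedSign_le hε) (h.continuousOn_zero hn)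

lemma eval_U_neg_one_ne_zero (n : ℕ) : (Chebyshev.U ℝ n).eval (-1) ≠ 0 := by
  have hn : (n : ℝ) + 1 ≠ 0 := by positivity
  rw [Chebyshev.U_eval_neg_one]
  exact mul_ne_zero (Int.cast_ne_zero.2 (Units.ne_zero _)) (by exact_mod_cast hn)

lemma abs_signU_neg_one (n : ℕ) : |signU n (-1)| = 1 := by
  obtain h | h := (eval_U_neg_one_ne_zero n).lt_or_gt
  · rw [signU, sign_neg h, SignType.coe_neg_one, abs_neg, abs_one]
  · rw [signU, sign_pos h, SignType.coe_one, abs_one]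

lemma exists_signU_eq_signU_neg_one (n : ℕ) :
    ∃ b ∈ Ioo (0 : ℝ) 1, ∀ t ∈ Icc 0 b, signU n (2 * t - 1) = signU n (-1) := by
  have hcont : ContinuousAt (fun t : ℝ => (Chebyshev.U ℝ n).eval (2 * t - 1)) 0 := by fun_prop
  have hsign : ContinuousAt (fun t : ℝ => SignType.sign ((Chebyshev.U ℝ n).eval (2 * t - 1))) 0 :=
    (continuousAt_sign_of_ne_zero (by simpa using eval_U_neg_one_ne_zero n)).comp' hcont
  have heq := hsign.eventually_mem (mem_nhds_discrete.2 (mem_singleton _))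
  obtain ⟨δ, hδ, hδeq⟩ := Metric.eventually_nhds_iff.1 heq
  refine ⟨min (δ / 2) (1 / 2), ⟨by positivity, (min_le_right _ _).trans_lt (by norm_num)⟩,
    fun t ht => ?_⟩
  have hdist : dist t 0 < δ := by
    rw [Real.dist_0_eq_abs, abs_of_nonneg ht.1]
    linarith [ht.2.trans (min_le_left _ _)]
  have hst := hδeq hdist
  simp only [mul_zero, zero_sub, mem_singleton_iff] at hst
  rw [signU, signU, hst]

lemma abs_perturbedSign_le_one_add (hε : 0 ≤ ε) (hε1 : ε ≤ 1)
    (hconst : ∀ t ∈ Icc 0 b, signU n (2 * t - 1) = signU n (-1)) {t : ℝ} (ht : 0 ≤ t) :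
    |perturbedSign n b ε t| ≤
      1 + ε * (signU n (-1) * {t | t ≤ b}.indicator (fun t => signU n (2 / b * t - 1)) t) := by
  set i := {t | t ≤ b}.indicator (fun t => signU n (2 / b * t - 1)) t with hi
  have hi1 : |i| ≤ 1 := abs_indicator_signU_le_one n b t
  by_cases htb : t ≤ b
  · have hκ : signU n (-1) * signU n (-1) = 1 := by
      rw [← abs_mul_abs_self, abs_signU_neg_one, one_mul]
    have hfactor : perturbedSign n b ε t = signU n (-1) * (1 + ε * (signU n (-1) * i)) := by
      rw [perturbedSign, hconst t ⟨ht, htb⟩, ← hi]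
      linear_combination -(ε * i) * hκ
    have hnonneg : 0 ≤ 1 + ε * (signU n (-1) * i) := by
      have h := abs_mul (signU n (-1)) i
      rw [abs_signU_neg_one, one_mul] at h
      nlinarith [neg_abs_le (signU n (-1) * i)]
    rw [hfactor, abs_mul, abs_signU_neg_one, one_mul, abs_of_nonneg hnonneg]
  · have hi0 : i = 0 := indicator_of_notMem (s := {t | t ≤ b}) htb _
    simpa [perturbedSign, ← hi, hi0] using abs_signU_le_one n (2 * t - 1)

lemma Lp_perturbedSign_le {q : ℝ} (hn : 1 ≤ n) (hq : 1 ≤ q) (hb : b ∈ Ioc (0 : ℝ) 1)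
    (hε : 0 ≤ ε) (hε1 : ε ≤ 1) (hconst : ∀ t ∈ Icc 0 b, signU n (2 * t - 1) = signU n (-1)) :
    Lp q 0 1 (perturbedSign n b ε) ≤ (((1 + ε) ^ q + (1 - ε) ^ q) / 2) ^ (1 / q) := by
  set s : ℝ → ℝ := fun t =>
    signU n (-1) * {t | t ≤ b}.indicator (fun t => signU n (2 / b * t - 1)) t with hs
  have hmeas : Measurable s := (measurable_indicator_signU n b).const_mul _
  have hs1 (t : ℝ) : |s t| ≤ 1 := by
    rw [hs, abs_mul, abs_signU_neg_one, one_mul]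
    exact abs_indicator_signU_le_one n b t
  have hs0 : ∫ t in 0..1, s t = 0 := by
    rw [hs, intervalIntegral.integral_const_mul,
      intervalIntegral.integral_indicator (Ioc_subset_Icc_self hb), integral_signU_comp hn hb.1,
      mul_zero]
  exact Lp_le_of_abs_le_one_add_mul hq hε hε1 hmeas hs1 hs0
    fun t ht => abs_perturbedSign_le_one_add hε hε1 hconst ht.1.le

lemma mIoo_le_abs (n : ℕ) (fd : ℕ → ℝ → ℝ) {a b t : ℝ} (ht : t ∈ Ioo a b) :
    mIoo n a b fd ≤ |fd n t| :=
  csInf_le ⟨0, forall_mem_image.2 fun _ _ => abs_nonneg _⟩ (mem_image_of_mem _ ht)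

lemma IsDn.exists_le_mul_of_le_abs {fd : ℕ → ℝ → ℝ} {a b m : ℝ} (h : IsDn n a b fd) (hm : 0 < m)
    (hle : ∀ t ∈ Ioo a b, m ≤ |fd n t|) : ∃ s : ℝ, |s| = 1 ∧ ∀ t ∈ Ioo a b, m ≤ s * fd n t := by
  obtain hneg | hpos := hasDerivWithinAt_forall_lt_or_forall_gt_of_forall_ne (convex_Ioo a b)
    (fun t ht => (h.2.2 t ht).hasDerivWithinAt) fun t ht => abs_pos.1 (hm.trans_le (hle t ht))
  · exact ⟨-1, by simp, fun t ht => by simpa [abs_of_neg (hneg t ht)] using hle t ht⟩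
  · exact ⟨1, by simp, fun t ht => by simpa [abs_of_pos (hpos t ht)] using hle t ht⟩

lemma IsDn.mIoo_mul_le_Lp_mul_Lp {fd : ℕ → ℝ → ℝ} {p q : ℝ} (hpq : q.HolderConjugate p)
    (hn : 1 ≤ n) (hb : b ∈ Ioc 0 1) (hε : 0 ≤ ε) (h : IsDn n 0 1 fd) :
    mIoo n 0 1 fd / (2 ^ (2 * n) * n !) * (1 + b ^ (n + 1) * ε) ≤
      Lp q 0 1 (perturbedSign n b ε) * Lp p 0 1 (fd 0) := by
  obtain hm | hm := le_or_gt (mIoo n 0 1 fd) 0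
  · have hb0 := hb.1
    calc _ ≤ (0 : ℝ) := mul_nonpos_of_nonpos_of_nonneg
          (div_nonpos_of_nonpos_of_nonneg hm (by positivity)) (by positivity)
      _ ≤ _ := mul_nonneg (Lp_nonneg zero_le_one _) (Lp_nonneg zero_le_one _)
  · obtain ⟨s, hs, hle⟩ := h.exists_le_mul_of_le_abs hm fun t ht => mIoo_le_abs n fd ht
    have hbound := (h.const_mul s).mul_le_Lp_perturbedSign_mul_Lp hpq hn hb hε hle
    rwa [Lp_const_mul_of_abs_eq_one hs] at hbound

theorem exists_lt_forall_mIoo_le_mul_Lp {p : ℝ} (hn : 1 ≤ n) (hp : 1 < p) :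
    ∃ B < 2 ^ (2 * n) * (n ! : ℝ), 0 ≤ B ∧
      ∀ fd, IsDn n 0 1 fd → mIoo n 0 1 fd ≤ B * Lp p 0 1 (fd 0) := by
  have hpq := (Real.HolderConjugate.conjExponent hp).symm
  set q := p.conjExponent
  obtain ⟨b, hb, hconst⟩ := exists_signU_eq_signU_neg_one n
  have hb' := Ioo_subset_Ioc_self hb
  obtain ⟨ε, ⟨hε, hε1⟩, hlt⟩ := exists_rpow_add_rpow_lt hpq.pos (pow_pos hb.1 (n + 1))
  set c := 1 + b ^ (n + 1) * ε
  set N := Lp q 0 1 (perturbedSign n b ε)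
  have hc : 0 < c := by have := hb.1; positivity
  have hN : N < c :=
    calc N ≤ (((1 + ε) ^ q + (1 - ε) ^ q) / 2) ^ (1 / q) :=
          Lp_perturbedSign_le hn hpq.lt.le hb' hε.le hε1.le hconst
      _ < (c ^ q) ^ (1 / q) := by
          have := sub_nonneg.2 hε1.le
          have := hpq.pos
          gcongr
      _ = c := by rw [one_div, Real.rpow_rpow_inv hc.le hpq.ne_zero]
  have hN0 : 0 ≤ N := Lp_nonneg zero_le_one _
  refine ⟨2 ^ (2 * n) * n ! * (N / c),
    mul_lt_of_lt_one_right (by positivity) ((div_lt_one hc).2 hN), by positivity, fun fd h => ?_⟩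
  have hle := h.mIoo_mul_le_Lp_mul_Lp hpq hn hb' hε.le
  rw [div_mul_eq_mul_div, div_le_iff₀ (by positivity), ← le_div_iff₀ hc] at hle
  exact hle.trans_eq (by ring)

end UpperBound

section LowerBound

open Real (cos)
open scoped Real

variable {n : ℕ} {p a b : ℝ} {f : ℝ → ℝ}

lemma Lp_pos (hp : 0 < p) (hab : a < b) (hf : ContinuousOn f (Icc a b))
    (hne : ∃ x ∈ Icc a b, f x ≠ 0) : 0 < Lp p a b f := by
  obtain ⟨x, hx, hfx⟩ := hne
  have h := intervalIntegral.integral_lt_integral_of_continuousOn_of_le_of_exists_lt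
    (f := fun _ => 0) hab continuousOn_const (hf.abs.rpow_const fun _ _ => Or.inr hp.le)
    (fun _ _ => by positivity) ⟨x, hx, Real.rpow_pos_of_pos (abs_pos.2 hfx) _⟩
  rw [intervalIntegral.integral_zero] at h
  exact Real.rpow_pos_of_pos h _

lemma Lp_lt_one (hp : 0 < p) (hf : ContinuousOn f (Icc 0 1)) (hle : ∀ x ∈ Icc 0 1, |f x| ≤ 1)
    (hlt : ∃ x ∈ Icc 0 1, |f x| < 1) : Lp p 0 1 f < 1 := by
  obtain ⟨x, hx, hfx⟩ := hlt
  have h : ∫ t in 0..1, |f t| ^ p < ∫ _ in (0 : ℝ)..1, (1 : ℝ) :=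
    intervalIntegral.integral_lt_integral_of_continuousOn_of_le_of_exists_lt zero_lt_one
      (hf.abs.rpow_const fun _ _ => Or.inr hp.le) continuousOn_const
      (fun t ht => Real.rpow_le_one (abs_nonneg _) (hle t (Ioc_subset_Icc_self ht)) hp.le)
      ⟨x, hx, Real.rpow_lt_one (abs_nonneg _) hfx hp⟩
  rw [intervalIntegral.integral_const, sub_zero, one_smul] at h
  exact Real.rpow_lt_one
    (intervalIntegral.integral_nonneg zero_le_one fun _ _ => by positivity) h (by positivity)

/-- The Chebyshev polynomial `T_n` carried over to `[0, 1]`, as the sequence of its derivatives: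
`shiftedT n k` is the `k`-th one. It witnesses the lower bound for `C(n,p)`. -/
noncomputable def shiftedT (n k : ℕ) (x : ℝ) : ℝ :=
  2 ^ k * (derivative^[k] (Chebyshev.T ℝ n)).eval (2 * x + -1)

lemma isDn_shiftedT (hn : 1 ≤ n) : IsDn n 0 1 (shiftedT n) := by
  refine IsDn.comp_affine hn two_pos (-1) (fd := fun k x => (derivative^[k] _).eval x) ?_
  exact isDn_polynomial hn _ _ _

lemma shiftedT_zero (n : ℕ) (x : ℝ) :
    shiftedT n 0 x = (Chebyshev.T ℝ n).eval (2 * x + -1) := by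
  rw [shiftedT, pow_zero, one_mul, Function.iterate_zero_apply]

lemma shiftedT_self (hn : 1 ≤ n) (x : ℝ) : shiftedT n n x = 2 ^ (2 * n - 1) * n ! := by
  have hdeg : (Chebyshev.T ℝ n).natDegree = n := Chebyshev.natDegree_T ℝ n
  have hlead : (Chebyshev.T ℝ n).coeff n = 2 ^ (n - 1) := by
    have h := Chebyshev.leadingCoeff_T ℝ n
    rwa [leadingCoeff, hdeg] at h
  rw [shiftedT, eval_iterate_derivative_of_natDegree_le hdeg.le, hlead, mul_left_comm, ← pow_add,
    mul_comm]
  congr 2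
  omega

lemma mIoo_shiftedT (hn : 1 ≤ n) (hab : a < b) :
    mIoo n a b (shiftedT n) = 2 ^ (2 * n - 1) * n ! := by
  simp only [mIoo, shiftedT_self hn, (nonempty_Ioo.2 hab).image_const, csInf_singleton]
  exact abs_of_pos (by positivity)

lemma exists_shiftedT_zero_ne_zero (n : ℕ) : ∃ x ∈ Icc (0 : ℝ) 1, shiftedT n 0 x ≠ 0 := by
  refine ⟨1, right_mem_Icc.2 zero_le_one, ?_⟩
  rw [shiftedT_zero, show 2 * 1 + -1 = (1 : ℝ) by norm_num, Chebyshev.T_eval_one]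
  exact one_ne_zero

lemma abs_shiftedT_zero_le_one {x : ℝ} (hx : x ∈ Icc 0 1) : |shiftedT n 0 x| ≤ 1 := by
  rw [shiftedT_zero]
  exact Chebyshev.abs_eval_T_real_le_one _ (abs_le.2 ⟨by linarith [hx.1], by linarith [hx.2]⟩)

lemma exists_shiftedT_zero_eq_zero (hn : 1 ≤ n) : ∃ x ∈ Icc (0 : ℝ) 1, shiftedT n 0 x = 0 := by
  have hn0 : (n : ℝ) ≠ 0 := by positivity
  set θ := π / (2 * n)
  have hθ : ((n : ℤ) : ℝ) * θ = π / 2 := by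
    simp only [θ, Int.cast_natCast]
    field_simp
  refine ⟨(cos θ + 1) / 2, ⟨?_, ?_⟩, ?_⟩
  · linarith [Real.neg_one_le_cos θ]
  · linarith [Real.cos_le_one θ]
  · rw [shiftedT_zero, show 2 * ((cos θ + 1) / 2) + -1 = cos θ by ring, Chebyshev.T_real_cos, hθ,
      Real.cos_pi_div_two]

theorem lt_mIoo_shiftedT_div_Lp (hn : 1 ≤ n) (hp : 0 < p) :
    2 ^ (2 * n - 1) * (n ! : ℝ) <
      mIoo n 0 1 (shiftedT n) / Lp p 0 1 (shiftedT n 0) := by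
  have hcont : ContinuousOn (shiftedT n 0) (Icc 0 1) := (isDn_shiftedT hn).continuousOn_zero hn
  have hpos : 0 < Lp p 0 1 (shiftedT n 0) :=
    Lp_pos hp one_pos hcont (exists_shiftedT_zero_ne_zero n)
  obtain ⟨z, hz, hz0⟩ := exists_shiftedT_zero_eq_zero hn
  have hlt : Lp p 0 1 (shiftedT n 0) < 1 :=
    Lp_lt_one hp hcont (fun x hx => abs_shiftedT_zero_le_one hx) ⟨z, hz, by simp [hz0]⟩
  rw [mIoo_shiftedT hn one_pos, lt_div_iff₀ hpos]
  exact mul_lt_of_lt_one_right (by positivity) hlt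

end LowerBound

/-- For `1 < p < ∞`, one has `2^{2n-1} n! < C(n,p) < 2^{2n} n!`. -/
theorem stmt15 (n : ℕ) (hn : 1 ≤ n) (p : ℝ) (hp : 1 < p) :
    2 ^ (2 * n - 1) * (n ! : ℝ) < Cnp n p ∧ Cnp n p < 2 ^ (2 * n) * (n ! : ℝ) := by
  obtain ⟨B, hB, hB0, hle⟩ := exists_lt_forall_mIoo_le_mul_Lp hn hp
  have hub : B ∈ upperBounds {c | ∃ fd : ℕ → ℝ → ℝ, IsDn n 0 1 fd ∧
      (∃ x ∈ Set.Icc (0 : ℝ) 1, fd 0 x ≠ 0) ∧ c = mIoo n 0 1 fd / Lp p 0 1 (fd 0)} := by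
    rintro c ⟨fd, h, -, rfl⟩
    exact div_le_of_le_mul₀ (Lp_nonneg zero_le_one _) hB0 (hle fd h)
  have hT := isDn_shiftedT hn
  have hT0 := exists_shiftedT_zero_ne_zero n
  exact ⟨(lt_mIoo_shiftedT_div_Lp hn (by linarith)).trans_le
      (le_csSup ⟨B, hub⟩ ⟨shiftedT n, hT, hT0, rfl⟩),
    lt_of_le_of_lt (csSup_le ⟨_, shiftedT n, hT, hT0, rfl⟩ hub) hB⟩
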